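/- Let $c < -\frac{3}{2}$ and let $E_1 < E_2 < E_3$ be the three real roots of $2E(c-E)^2 + 1 = 0$. Then for every real $E < 0$ with $2E(E-c)^2 + 1 \ge 0$, either $E_1 \le E \le E_2$ or $E_3 \le E < 0$. Moreover $E_2 - c < 1 < E_3 - c$; hence, setting $L := E - c$: if $E \le E_2$ then $L \le E_2 - c < 1$, while if $E \ge E_3$ then $1 < E_3 - c \le L < -c$. -/

import Mathlib

/-!
Three distinct roots of a cubic determine its factorisation, so the sign of
`2E(E-c)² + 1 = 2(E-E₁)(E-E₂)(E-E₃)` gives the admissible energies. Testing that sign at two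
energies locates the circular orbits: the cubic is `1` at `E = c` and `2c + 3 < 0` at `E = c + 1`.
If `E₃ ≤ c`, then `c + 1` would be admissible as well; so `E₁ ≤ c`, and the forbidden energy
`c + 1` lies in the gap `(E₂, E₃)`, that is, `E₂ - c < 1 < E₃ - c`.
-/

open Set

theorem cubic_eq_mul_prod_sub_of_roots {R : Type*} [CommRing R] [NoZeroDivisors R]
    {a b c d x y z : R} (hxy : x ≠ y) (hxz : x ≠ z) (hyz : y ≠ z)
    (hx : a * x ^ 3 + b * x ^ 2 + c * x + d = 0)
    (hy : a * y ^ 3 + b * y ^ 2 + c * y + d = 0)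
    (hz : a * z ^ 3 + b * z ^ 2 + c * z + d = 0) (t : R) :
    a * t ^ 3 + b * t ^ 2 + c * t + d = a * ((t - x) * (t - y) * (t - z)) := by
  -- Newton interpolation: the divided differences at the three roots vanish.
  have first_difference {u v : R} (huv : u ≠ v)
      (hu : a * u ^ 3 + b * u ^ 2 + c * u + d = 0)
      (hv : a * v ^ 3 + b * v ^ 2 + c * v + d = 0) :
      a * (u ^ 2 + u * v + v ^ 2) + b * (u + v) + c = 0 := by
    apply mul_left_cancel₀ (sub_ne_zero.2 huv)
    linear_combination hu - hv
  have hxy_difference := first_difference hxy hx hy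
  have second_difference : a * (x + y + z) + b = 0 := by
    apply mul_left_cancel₀ (sub_ne_zero.2 hyz)
    linear_combination hxy_difference - first_difference hxz hx hz
  linear_combination hx + (t - x) * hxy_difference + (t - x) * (t - y) * second_difference

section OrderedRing

variable {R : Type*} [CommRing R] [LinearOrder R] [IsStrictOrderedRing R]

theorem prod_sub_nonneg_iff_mem_Icc_or_le {x y z : R} (hxy : x ≤ y) (hyz : y ≤ z) (t : R) :
    0 ≤ (t - x) * (t - y) * (t - z) ↔ t ∈ Icc x y ∨ z ≤ t := by
  constructor
  · intro hprod
    contrapose! hprod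
    obtain ⟨hgap, htz⟩ := hprod
    refine mul_neg_of_pos_of_neg ?_ (sub_neg.2 htz)
    rcases lt_or_ge t x with htx | hxt
    · exact mul_pos_of_neg_of_neg (sub_neg.2 htx) (sub_neg.2 (htx.trans_le hxy))
    · have hyt : y < t := not_le.1 fun hty => hgap ⟨hxt, hty⟩
      exact mul_pos (sub_pos.2 (hxy.trans_lt hyt)) (sub_pos.2 hyt)
  · rintro (⟨hxt, hty⟩ | hzt)
    · exact mul_nonneg_of_nonpos_of_nonpos
        (mul_nonpos_of_nonneg_of_nonpos (sub_nonneg.2 hxt) (sub_nonpos.2 hty))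
        (sub_nonpos.2 (hty.trans hyz))
    · have hyt := hyz.trans hzt
      exact mul_nonneg (mul_nonneg (sub_nonneg.2 (hxy.trans hyt)) (sub_nonneg.2 hyt))
        (sub_nonneg.2 hzt)

variable {c E1 E2 E3 : R}

theorem eccentricity_sq_nonneg_iff (h12 : E1 < E2) (h23 : E2 < E3)
    (hE1 : 2 * E1 * (c - E1) ^ 2 + 1 = 0)
    (hE2 : 2 * E2 * (c - E2) ^ 2 + 1 = 0)
    (hE3 : 2 * E3 * (c - E3) ^ 2 + 1 = 0) (E : R) :
    0 ≤ 2 * E * (E - c) ^ 2 + 1 ↔ E ∈ Icc E1 E2 ∨ E3 ≤ E := by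
  have factorization :
      2 * E * (E - c) ^ 2 + 1 = 2 * ((E - E1) * (E - E2) * (E - E3)) := by
    rw [← cubic_eq_mul_prod_sub_of_roots (a := 2) (b := -4 * c) (c := 2 * c ^ 2) (d := 1)
      h12.ne (h12.trans h23).ne h23.ne (by linear_combination hE1)
      (by linear_combination hE2) (by linear_combination hE3)]
    ring
  rw [factorization, mul_nonneg_iff_of_pos_left two_pos,
    prod_sub_nonneg_iff_mem_Icc_or_le h12.le h23.le]

theorem add_one_mem_Ioo_of_eccentricity_sq_nonneg_iff (hc : 2 * c + 3 < 0)
    (hadmissible : ∀ E : R, 0 ≤ 2 * E * (E - c) ^ 2 + 1 ↔ E ∈ Icc E1 E2 ∨ E3 ≤ E) :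
    c + 1 ∈ Ioo E2 E3 := by
  have hc_admissible : c ∈ Icc E1 E2 ∨ E3 ≤ c := (hadmissible c).1 (by simp)
  have hforbidden : ¬(c + 1 ∈ Icc E1 E2 ∨ E3 ≤ c + 1) := by
    rw [← hadmissible, not_le]
    linear_combination hc
  obtain ⟨hnot_bounded, hnot_unbounded⟩ := not_or.1 hforbidden
  have hlt : c + 1 < E3 := not_le.1 hnot_unbounded
  have hle : E1 ≤ c + 1 := by
    rcases hc_admissible with hbounded | hunbounded
    · exact hbounded.1.trans (lt_add_one c).le
    · exact absurd hunbounded ((lt_add_one c).trans hlt).not_ge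
  exact ⟨not_le.1 fun h => hnot_bounded ⟨hle, h⟩, hlt⟩

theorem stmt_3_general (hc : 2 * c + 3 < 0) (h12 : E1 < E2) (h23 : E2 < E3)
    (hE1 : 2 * E1 * (c - E1) ^ 2 + 1 = 0)
    (hE2 : 2 * E2 * (c - E2) ^ 2 + 1 = 0)
    (hE3 : 2 * E3 * (c - E3) ^ 2 + 1 = 0) :
    (∀ E : R, E < 0 → 0 ≤ 2 * E * (E - c) ^ 2 + 1 →
      (E1 ≤ E ∧ E ≤ E2) ∨ (E3 ≤ E ∧ E < 0)) ∧
    E2 - c < 1 ∧ 1 < E3 - c ∧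
    (∀ E : R, E < 0 →
      (E ≤ E2 → E - c ≤ E2 - c ∧ E2 - c < 1) ∧
      (E3 ≤ E → 1 < E3 - c ∧ E3 - c ≤ E - c ∧ E - c < -c)) := by
  have hadmissible := eccentricity_sq_nonneg_iff h12 h23 hE1 hE2 hE3
  have hgap := add_one_mem_Ioo_of_eccentricity_sq_nonneg_iff hc hadmissible
  have hdirect_bounded : E2 - c < 1 := sub_lt_iff_lt_add'.2 hgap.1
  have hdirect_unbounded : 1 < E3 - c := lt_sub_iff_add_lt'.2 hgap.2
  refine ⟨fun E hE hecc => ?_, hdirect_bounded, hdirect_unbounded, fun E hE => ⟨?_, ?_⟩⟩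
  · exact ((hadmissible E).1 hecc).imp_right fun h => ⟨h, hE⟩
  · exact fun h => ⟨sub_le_sub_right h c, hdirect_bounded⟩
  · exact fun h => ⟨hdirect_unbounded, sub_le_sub_right h c, by linarith⟩

end OrderedRing

/-- Lemma 3.1 of the paper for `c < -3/2`: given the three roots `E₁ < E₂ < E₃` of
`2E(c-E)² + 1 = 0`, every `E < 0` with `2E(E-c)² + 1 ≥ 0` lies in `[E₁,E₂]` or in `[E₃,0)`;
moreover `E₂ - c < 1 < E₃ - c`, so with `L := E - c`: if `E ≤ E₂` then `L ≤ E₂ - c < 1`,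
and if `E ≥ E₃` then `1 < E₃ - c ≤ L < -c`. -/
theorem stmt_3 (c E1 E2 E3 : ℝ) (hc : c < -(3 / 2))
    (h12 : E1 < E2) (h23 : E2 < E3)
    (hE1 : 2 * E1 * (c - E1) ^ 2 + 1 = 0)
    (hE2 : 2 * E2 * (c - E2) ^ 2 + 1 = 0)
    (hE3 : 2 * E3 * (c - E3) ^ 2 + 1 = 0) :
    (∀ E : ℝ, E < 0 → 0 ≤ 2 * E * (E - c) ^ 2 + 1 →
      (E1 ≤ E ∧ E ≤ E2) ∨ (E3 ≤ E ∧ E < 0)) ∧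
    E2 - c < 1 ∧ 1 < E3 - c ∧
    (∀ E : ℝ, E < 0 → 0 ≤ 2 * E * (E - c) ^ 2 + 1 →
      (E ≤ E2 → E - c ≤ E2 - c ∧ E2 - c < 1) ∧
      (E3 ≤ E → 1 < E3 - c ∧ E3 - c ≤ E - c ∧ E - c < -c)) := by
  obtain ⟨hrange, hbounded, hunbounded, hmomentum⟩ :=
    stmt_3_general (by linarith) h12 h23 hE1 hE2 hE3
  exact ⟨hrange, hbounded, hunbounded, fun E hE _ => hmomentum E hE⟩
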